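/- arXiv:1705.06214 — 2 statements merged into one kernel-verified Lean document; each statement's English description precedes it below -/
import Mathlib

section
/- The S5_ALC concept ∃◇r.A (existential restriction along the modalized role ◇r) is not bisimulation invariant: there exist finite S5-interpretations I, J, worlds w ∈ W^I, v ∈ W^J, and individuals d ∈ Δ^I, e ∈ Δ^J with I,w,d ≈ J,v,e such that d ∈ (∃◇r.A)^{I,w} but e ∉ (∃◇r.A)^{J,v}. Consequently, ∃◇r.A is not expressible by any S5^loc_ALC-concept. -/
/-! Core definitions: S5-interpretations, S5^loc_ALC concepts, S5_FOL formulas,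
    bisimulations, games, Gaifman locality, unravellings, normal forms,
    and the two-sorted correspondence language. -/

/-- An S5-interpretation: nonempty sets of worlds and individuals, and for each
world an ALC interpretation of concept and role names. -/
structure S5Interp (NC NR : Type) : Type 1 where
  W : Type
  Δ : Type
  W_nonempty : Nonempty W
  Δ_nonempty : Nonempty Δ
  conc : NC → W → Set Δ
  role : NR → W → Set (Δ × Δ)

variable {NC NR : Type}

/-- Concepts of S5^loc_ALC : C ::= A | ¬C | C ⊓ D | ∃r.C | □C. -/
inductive DLConcept (NC NR : Type) : Type where
  | atom : NC → DLConcept NC NR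
  | neg  : DLConcept NC NR → DLConcept NC NR
  | and  : DLConcept NC NR → DLConcept NC NR → DLConcept NC NR
  | ex   : NR → DLConcept NC NR → DLConcept NC NR
  | box  : DLConcept NC NR → DLConcept NC NR

/-- ◇C := ¬□¬C. -/
def DLConcept.dia (C : DLConcept NC NR) : DLConcept NC NR := .neg (.box (.neg C))

/-- Satisfaction I,w,d ⊨ C. -/
def DLConcept.Sat (I : S5Interp NC NR) : I.W → I.Δ → DLConcept NC NR → Prop
  | w, d, .atom A  => d ∈ I.conc A w
  | w, d, .neg C   => ¬ DLConcept.Sat I w d C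
  | w, d, .and C D => DLConcept.Sat I w d C ∧ DLConcept.Sat I w d D
  | w, d, .ex r C  => ∃ e, (d, e) ∈ I.role r w ∧ DLConcept.Sat I w e C
  | _, d, .box C   => ∀ v, DLConcept.Sat I v d C

/-- Rank of a concept: maximal nesting depth of □ and ∃r. -/
def DLConcept.rank : DLConcept NC NR → ℕ
  | .atom _  => 0
  | .neg C   => C.rank
  | .and C D => max C.rank D.rank
  | .ex _ C  => C.rank + 1
  | .box C   => C.rank + 1

/-- Formulas of S5-modalized first-order logic over the correspondence
language (variables are natural numbers). -/
inductive FOForm (NC NR : Type) : Type where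
  | conc : NC → ℕ → FOForm NC NR
  | role : NR → ℕ → ℕ → FOForm NC NR
  | eq   : ℕ → ℕ → FOForm NC NR
  | neg  : FOForm NC NR → FOForm NC NR
  | and  : FOForm NC NR → FOForm NC NR → FOForm NC NR
  | ex   : ℕ → FOForm NC NR → FOForm NC NR
  | box  : FOForm NC NR → FOForm NC NR

/-- Satisfaction I,w,η ⊨ φ for S5_FOL. -/
def FOForm.Sat (I : S5Interp NC NR) : I.W → (ℕ → I.Δ) → FOForm NC NR → Prop
  | w, η, .conc A x   => η x ∈ I.conc A w
  | w, η, .role r x y => (η x, η y) ∈ I.role r w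
  | _, η, .eq x y     => η x = η y
  | w, η, .neg φ      => ¬ FOForm.Sat I w η φ
  | w, η, .and φ ψ    => FOForm.Sat I w η φ ∧ FOForm.Sat I w η ψ
  | w, η, .ex x φ     => ∃ d, FOForm.Sat I w (Function.update η x d) φ
  | _, η, .box φ      => ∀ v, FOForm.Sat I v η φ

/-- Rank of a formula: maximal nesting depth of □ and ∃. -/
def FOForm.rank : FOForm NC NR → ℕ
  | .conc _ _   => 0
  | .role _ _ _ => 0
  | .eq _ _     => 0
  | .neg φ      => φ.rank
  | .and φ ψ    => max φ.rank ψ.rank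
  | .ex _ φ     => φ.rank + 1
  | .box φ      => φ.rank + 1

/-- Free variables of a formula. -/
def FOForm.freeVars : FOForm NC NR → Set ℕ
  | .conc _ x   => {x}
  | .role _ x y => {x, y}
  | .eq x y     => {x, y}
  | .neg φ      => φ.freeVars
  | .and φ ψ    => φ.freeVars ∪ ψ.freeVars
  | .ex x φ     => φ.freeVars \ {x}
  | .box φ      => φ.freeVars

/-- The standard translation ST_x, using x+1 as the fresh variable for
existential restrictions. -/
def standardTranslation : ℕ → DLConcept NC NR → FOForm NC NR
  | x, .atom A  => .conc A x
  | x, .neg C   => .neg (standardTranslation x C)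
  | x, .and C D => .and (standardTranslation x C) (standardTranslation x D)
  | x, .ex r C  => .ex (x+1) (.and (.role r x (x+1)) (standardTranslation (x+1) C))
  | x, .box C   => .box (standardTranslation x C)

/-- Bisimulations between S5-interpretations. -/
def IsBisimulation (I J : S5Interp NC NR)
    (R : (I.W × I.Δ) → (J.W × J.Δ) → Prop) : Prop :=
  ∀ w d v e, R (w, d) (v, e) →
    (∀ A : NC, d ∈ I.conc A w ↔ e ∈ J.conc A v) ∧
    (∀ w', ∃ v', R (w', d) (v', e)) ∧
    (∀ v', ∃ w', R (w', d) (v', e)) ∧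
    (∀ (r : NR) d', (d, d') ∈ I.role r w → ∃ e', (e, e') ∈ J.role r v ∧ R (w, d') (v, e')) ∧
    (∀ (r : NR) e', (e, e') ∈ J.role r v → ∃ d', (d, d') ∈ I.role r w ∧ R (w, d') (v, e'))

/-- I,w,d ≈ J,v,e : some bisimulation relates (w,d) and (v,e). -/
def Bisimilar (I J : S5Interp NC NR) (w : I.W) (d : I.Δ) (v : J.W) (e : J.Δ) : Prop :=
  ∃ R, IsBisimulation I J R ∧ R (w, d) (v, e)

/-- Depth-n bisimilarity ≈ₙ (Duplicator wins the n-round bisimulation game). -/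
def BisimAtDepth (I J : S5Interp NC NR) : ℕ → I.W → I.Δ → J.W → J.Δ → Prop
  | 0, w, d, v, e => ∀ A : NC, d ∈ I.conc A w ↔ e ∈ J.conc A v
  | n+1, w, d, v, e =>
      (∀ A : NC, d ∈ I.conc A w ↔ e ∈ J.conc A v) ∧
      (∀ w', ∃ v', BisimAtDepth I J n w' d v' e) ∧
      (∀ v', ∃ w', BisimAtDepth I J n w' d v' e) ∧
      (∀ (r : NR) d', (d, d') ∈ I.role r w →
        ∃ e', (e, e') ∈ J.role r v ∧ BisimAtDepth I J n w d' v e') ∧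
      (∀ (r : NR) e', (e, e') ∈ J.role r v →
        ∃ d', (d, d') ∈ I.role r w ∧ BisimAtDepth I J n w d' v e')

/-- Atomic agreement of two configurations. -/
def AltAtom (I J : S5Interp NC NR) (w : I.W) (d : I.Δ) (v : J.W) (e : J.Δ) : Prop :=
  ∀ A : NC, d ∈ I.conc A w ↔ e ∈ J.conc A v

/-- One pair of Δ-moves (in either interpretation), continuing with `P`. -/
def AltDelta (I J : S5Interp NC NR) (P : I.W → I.Δ → J.W → J.Δ → Prop)
    (w : I.W) (d : I.Δ) (v : J.W) (e : J.Δ) : Prop :=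
  (∀ (r : NR) d', (d, d') ∈ I.role r w → ∃ e', (e, e') ∈ J.role r v ∧ P w d' v e') ∧
  (∀ (r : NR) e', (e, e') ∈ J.role r v → ∃ d', (d, d') ∈ I.role r w ∧ P w d' v e')

/-- Duplicator wins the n-round alternating bisimulation game (each round:
an optional pair of W-moves followed by a mandatory pair of Δ-moves; one extra
optional pair of W-moves may be played at the very end). -/
def AltBisim (I J : S5Interp NC NR) : ℕ → I.W → I.Δ → J.W → J.Δ → Prop
  | 0, w, d, v, e =>
      AltAtom I J w d v e ∧
      (∀ w', ∃ v', AltAtom I J w' d v' e) ∧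
      (∀ v', ∃ w', AltAtom I J w' d v' e)
  | n+1, w, d, v, e =>
      AltAtom I J w d v e ∧
      AltDelta I J (AltBisim I J n) w d v e ∧
      (∀ w', ∃ v', AltAtom I J w' d v' e ∧ AltDelta I J (AltBisim I J n) w' d v' e) ∧
      (∀ v', ∃ w', AltAtom I J w' d v' e ∧ AltDelta I J (AltBisim I J n) w' d v' e)

/-- Winning strategies in the unbounded alternating bisimulation game,
presented as relations closed under the game conditions. -/
def IsAltBisimulation (I J : S5Interp NC NR)
    (R : (I.W × I.Δ) → (J.W × J.Δ) → Prop) : Prop :=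
  ∀ w d v e, R (w, d) (v, e) →
    AltAtom I J w d v e ∧
    AltDelta I J (fun w' d' v' e' => R (w', d') (v', e')) w d v e ∧
    (∀ w', ∃ v', AltAtom I J w' d v' e ∧
      AltDelta I J (fun a b c f => R (a, b) (c, f)) w' d v' e) ∧
    (∀ v', ∃ w', AltAtom I J w' d v' e ∧
      AltDelta I J (fun a b c f => R (a, b) (c, f)) w' d v' e)

/-- I,w,d ≈^alt J,v,e : Duplicator wins the unbounded alternating game. -/
def AltBisimilar (I J : S5Interp NC NR) (w : I.W) (d : I.Δ) (v : J.W) (e : J.Δ) : Prop :=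
  ∃ R, IsAltBisimulation I J R ∧ R (w, d) (v, e)

/-- Partial isomorphism between configurations of the S5-Ehrenfeucht–Fraïssé game. -/
def PartialIso (I J : S5Interp NC NR) {k : ℕ} (w : I.W) (v : J.W)
    (ds : Fin k → I.Δ) (es : Fin k → J.Δ) : Prop :=
  (∀ i j, ds i = ds j ↔ es i = es j) ∧
  (∀ (A : NC) i, ds i ∈ I.conc A w ↔ es i ∈ J.conc A v) ∧
  (∀ (r : NR) i j, (ds i, ds j) ∈ I.role r w ↔ (es i, es j) ∈ J.role r v)

/-- S5-Ehrenfeucht–Fraïssé equivalence up to depth n (Duplicator wins the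
n-round EF game). -/
def EFEquiv (I J : S5Interp NC NR) :
    ℕ → (k : ℕ) → I.W → (Fin k → I.Δ) → J.W → (Fin k → J.Δ) → Prop
  | 0, _, w, ds, v, es => PartialIso I J w v ds es
  | n+1, k, w, ds, v, es =>
      PartialIso I J w v ds es ∧
      (∀ w', ∃ v', EFEquiv I J n k w' ds v' es) ∧
      (∀ v', ∃ w', EFEquiv I J n k w' ds v' es) ∧
      (∀ d, ∃ e, EFEquiv I J n (k+1) w (Fin.snoc ds d) v (Fin.snoc es e)) ∧
      (∀ e, ∃ d, EFEquiv I J n (k+1) w (Fin.snoc ds d) v (Fin.snoc es e))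

/-- Adjacency in the Gaifman graph of an S5-interpretation. -/
def GaifmanAdj (I : S5Interp NC NR) (d e : I.Δ) : Prop :=
  d ≠ e ∧ ∃ (r : NR) (w : I.W), (d, e) ∈ I.role r w ∨ (e, d) ∈ I.role r w

/-- The radius-ℓ neighbourhood U^ℓ(d) of d in the Gaifman graph
(the set of elements at Gaifman distance at most ℓ from d). -/
def GaifmanBall (I : S5Interp NC NR) (d : I.Δ) : ℕ → Set I.Δ
  | 0 => {d}
  | ℓ+1 => GaifmanBall I d ℓ ∪ {e | ∃ e' ∈ GaifmanBall I d ℓ, GaifmanAdj I e' e}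

lemma mem_gaifmanBall_self (I : S5Interp NC NR) (d : I.Δ) (ℓ : ℕ) :
    d ∈ GaifmanBall I d ℓ := by
  induction ℓ with
  | zero => simp [GaifmanBall]
  | succ n ih => exact Set.mem_union_left _ ih

/-- Restriction I|_U of an S5-interpretation to a nonempty subset U of its domain. -/
def S5Interp.restrict (I : S5Interp NC NR) (U : Set I.Δ) (hU : U.Nonempty) :
    S5Interp NC NR where
  W := I.W
  Δ := ↥U
  W_nonempty := I.W_nonempty
  Δ_nonempty := hU.to_subtype
  conc A w := {x | (x : I.Δ) ∈ I.conc A w}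
  role r w := {p | ((p.1 : I.Δ), (p.2 : I.Δ)) ∈ I.role r w}

/-- Restriction I|_{U^ℓ(d)} to the radius-ℓ Gaifman neighbourhood of d. -/
def S5Interp.ballRestrict (I : S5Interp NC NR) (d : I.Δ) (ℓ : ℕ) : S5Interp NC NR :=
  I.restrict (GaifmanBall I d ℓ) ⟨d, mem_gaifmanBall_self I d ℓ⟩

/-- The point d viewed inside I|_{U^ℓ(d)}. -/
def S5Interp.ballPt (I : S5Interp NC NR) (d : I.Δ) (ℓ : ℕ) : (I.ballRestrict d ℓ).Δ :=
  ⟨d, mem_gaifmanBall_self I d ℓ⟩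

/-- A formula φ with (single) free variable x is ℓ-local if its truth at d only
depends on the restriction of the interpretation to U^ℓ(d). -/
def IsLocal (φ : FOForm NC NR) (x : ℕ) (ℓ : ℕ) : Prop :=
  ∀ (I : S5Interp NC NR) (w : I.W) (d : I.Δ)
    (η : ℕ → I.Δ) (θ : ℕ → (I.ballRestrict d ℓ).Δ),
    η x = d → (θ x).val = d →
    (FOForm.Sat I w η φ ↔ FOForm.Sat (I.ballRestrict d ℓ) w θ φ)

/-- φ (with single free variable x) is bisimulation invariant. -/
def BisimInvariant (φ : FOForm NC NR) (x : ℕ) : Prop :=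
  ∀ (I J : S5Interp NC NR) (w : I.W) (d : I.Δ) (v : J.W) (e : J.Δ),
    Bisimilar I J w d v e →
    ∀ (η : ℕ → I.Δ) (θ : ℕ → J.Δ), η x = d → θ x = e →
      (FOForm.Sat I w η φ ↔ FOForm.Sat J v θ φ)

/-- φ (with single free variable x) is bisimulation invariant over finite
S5-interpretations. -/
def BisimInvariantFin (φ : FOForm NC NR) (x : ℕ) : Prop :=
  ∀ (I J : S5Interp NC NR), Finite I.W → Finite I.Δ → Finite J.W → Finite J.Δ →
    ∀ (w : I.W) (d : I.Δ) (v : J.W) (e : J.Δ),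
    Bisimilar I J w d v e →
    ∀ (η : ℕ → I.Δ) (θ : ℕ → J.Δ), η x = d → θ x = e →
      (FOForm.Sat I w η φ ↔ FOForm.Sat J v θ φ)

/-- One step along some role at some world (the edge relation used in tree unravellings). -/
def roleStep (I : S5Interp NC NR) (a b : I.Δ) : Prop :=
  ∃ (r : NR) (w : I.W), (a, b) ∈ I.role r w

/-- Paths from d₀: a path (d₀,d₁,…,d_k) is encoded by its tail list (d₁,…,d_k). -/
def UPath (I : S5Interp NC NR) (d0 : I.Δ) : Type :=
  { l : List I.Δ // List.Chain (roleStep I) d0 l }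

/-- π : the last entry of a path. -/
def UPath.last {I : S5Interp NC NR} {d0 : I.Δ} (p : UPath I d0) : I.Δ :=
  (d0 :: p.val).getLast (by simp)

/-- The tree unravelling I*_{d₀}. -/
def S5Interp.unravel (I : S5Interp NC NR) (d0 : I.Δ) : S5Interp NC NR where
  W := I.W
  Δ := UPath I d0
  W_nonempty := I.W_nonempty
  Δ_nonempty := ⟨⟨[], List.Chain.nil⟩⟩
  conc A w := {p | p.last ∈ I.conc A w}
  role r w := {q | ∃ d, (q.1.last, d) ∈ I.role r w ∧ q.2.val = q.1.val ++ [d]}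

/-- Paths from d₀ of length at most ℓ. -/
def PPath (I : S5Interp NC NR) (d0 : I.Δ) (ℓ : ℕ) : Type :=
  { l : List I.Δ // List.Chain (roleStep I) d0 l ∧ l.length ≤ ℓ }

def PPath.last {I : S5Interp NC NR} {d0 : I.Δ} {ℓ : ℕ} (p : PPath I d0 ℓ) : I.Δ :=
  (d0 :: p.val).getLast (by simp)

/-- The map ρ of the partial unravelling: a surviving path goes to its last
entry, an element of the fresh copy of I to itself. -/
def punravelProj (I : S5Interp NC NR) (d0 : I.Δ) (ℓ : ℕ) :
    PPath I d0 ℓ ⊕ I.Δ → I.Δ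
  | Sum.inl p => p.last
  | Sum.inr d => d

/-- The partial unravelling of I at d₀ up to level ℓ: the tree unravelling
restricted to the radius-(ℓ+1) Gaifman neighbourhood of the root, with each
leaf path at distance ℓ+1 identified with its last entry in a fresh disjoint
copy of I. -/
def S5Interp.partialUnravel (I : S5Interp NC NR) (d0 : I.Δ) (ℓ : ℕ) :
    S5Interp NC NR where
  W := I.W
  Δ := PPath I d0 ℓ ⊕ I.Δ
  W_nonempty := I.W_nonempty
  Δ_nonempty := ⟨Sum.inl ⟨[], List.Chain.nil, Nat.zero_le _⟩⟩
  conc A w := {x | punravelProj I d0 ℓ x ∈ I.conc A w}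
  role r w := fun q =>
    match q with
    | (Sum.inl p, Sum.inl p') => ∃ d, (p.last, d) ∈ I.role r w ∧ p'.val = p.val ++ [d]
    | (Sum.inl p, Sum.inr d) => p.val.length = ℓ ∧ (p.last, d) ∈ I.role r w
    | (Sum.inr _, Sum.inl _) => False
    | (Sum.inr d, Sum.inr d') => (d, d') ∈ I.role r w

/-! Normal forms, over the finite signature N_C = {A_0,…,A_s}, N_R = {r_0,…,r_{t-1}}. -/

/-- Conjunction of a list of concepts (the empty conjunction is ⊤, encoded as
¬(A₀ ⊓ ¬A₀); it is never used since atom lists are nonempty). -/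
def bigConj (s t : ℕ) : List (DLConcept (Fin (s+1)) (Fin t)) → DLConcept (Fin (s+1)) (Fin t)
  | [] => .neg (.and (.atom 0) (.neg (.atom 0)))
  | [C] => C
  | C :: D :: L => .and C (bigConj s t (D :: L))

/-- Disjunction of a list of concepts (the empty disjunction is ⊥ = A₀ ⊓ ¬A₀). -/
def bigDisj (s t : ℕ) : List (DLConcept (Fin (s+1)) (Fin t)) → DLConcept (Fin (s+1)) (Fin t)
  | [] => .and (.atom 0) (.neg (.atom 0))
  | [C] => C
  | C :: D :: L => .neg (.and (.neg C) (.neg (bigDisj s t (D :: L))))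

/-- All lists obtained from a given list of atoms by choosing a sign
(nothing or negation) for each atom, in order. -/
def signedAll (s t : ℕ) :
    List (DLConcept (Fin (s+1)) (Fin t)) → List (List (DLConcept (Fin (s+1)) (Fin t)))
  | [] => [[]]
  | B :: L =>
      ((signedAll s t L).map (fun T => B :: T)) ++
      ((signedAll s t L).map (fun T => DLConcept.neg B :: T))

/-- The atoms of rank k, given the list of normal forms of rank k−1:
at_k = N_C ∪ {∃r.C | C ∈ nf_{k−1}} ∪ {◇C | C ∈ nf_{k−1}} (in a fixed order). -/
def atomsOf (s t : ℕ) (prev : List (DLConcept (Fin (s+1)) (Fin t))) :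
    List (DLConcept (Fin (s+1)) (Fin t)) :=
  ((List.finRange (s+1)).map DLConcept.atom)
    ++ ((List.finRange t).flatMap (fun r => prev.map (DLConcept.ex r)))
    ++ (prev.map DLConcept.dia)

/-- The normal forms of rank k (as a list enumerating the set nf_k in a fixed
order): all signed conjunctions over the atoms of rank k, where nf_{−1} = ∅. -/
def nfList (s t : ℕ) : ℕ → List (DLConcept (Fin (s+1)) (Fin t))
  | 0 => (signedAll s t (atomsOf s t [])).map (bigConj s t)
  | k+1 => (signedAll s t (atomsOf s t (nfList s t k))).map (bigConj s t)

/-! The two-sorted correspondence language SL. -/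

/-- Formulas of the two-sorted first-order language SL (domain variables and
world variables are natural numbers; each predicate takes one extra
world-sort argument). -/
inductive SLForm (NC NR : Type) : Type where
  | conc : NC → ℕ → ℕ → SLForm NC NR        -- A(x, v)
  | role : NR → ℕ → ℕ → ℕ → SLForm NC NR    -- r(x, y, v)
  | eqD  : ℕ → ℕ → SLForm NC NR             -- x = y (domain sort)
  | eqW  : ℕ → ℕ → SLForm NC NR             -- v = u (world sort)
  | neg  : SLForm NC NR → SLForm NC NR
  | and  : SLForm NC NR → SLForm NC NR → SLForm NC NR
  | exD  : ℕ → SLForm NC NR → SLForm NC NR  -- ∃x (domain sort)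
  | exW  : ℕ → SLForm NC NR → SLForm NC NR  -- ∃v (world sort)

/-- Satisfaction for SL over S5-interpretations, with a domain valuation η and
a world valuation ξ. -/
def SLForm.Sat (I : S5Interp NC NR) : (ℕ → I.Δ) → (ℕ → I.W) → SLForm NC NR → Prop
  | η, ξ, .conc A x v   => η x ∈ I.conc A (ξ v)
  | η, ξ, .role r x y v => (η x, η y) ∈ I.role r (ξ v)
  | η, _, .eqD x y      => η x = η y
  | _, ξ, .eqW v u      => ξ v = ξ u
  | η, ξ, .neg φ        => ¬ SLForm.Sat I η ξ φ
  | η, ξ, .and φ ψ      => SLForm.Sat I η ξ φ ∧ SLForm.Sat I η ξ ψ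
  | η, ξ, .exD x φ      => ∃ d, SLForm.Sat I (Function.update η x d) ξ φ
  | η, ξ, .exW v φ      => ∃ u, SLForm.Sat I η (Function.update ξ v u) φ

/-- Free domain-sort variables of an SL formula. -/
def SLForm.freeDVars : SLForm NC NR → Set ℕ
  | .conc _ x _   => {x}
  | .role _ x y _ => {x, y}
  | .eqD x y      => {x, y}
  | .eqW _ _      => ∅
  | .neg φ        => φ.freeDVars
  | .and φ ψ      => φ.freeDVars ∪ ψ.freeDVars
  | .exD x φ      => φ.freeDVars \ {x}
  | .exW _ φ      => φ.freeDVars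

/-- Free world-sort variables of an SL formula. -/
def SLForm.freeWVars : SLForm NC NR → Set ℕ
  | .conc _ _ v   => {v}
  | .role _ _ _ v => {v}
  | .eqD _ _      => ∅
  | .eqW v u      => {v, u}
  | .neg φ        => φ.freeWVars
  | .and φ ψ      => φ.freeWVars ∪ ψ.freeWVars
  | .exD _ φ      => φ.freeWVars
  | .exW v φ      => φ.freeWVars \ {v}

/-- The translation (−)^{†_v} of S5_FOL into SL: predicates get the world
variable v as extra argument, and □ becomes universal quantification over v. -/
def dagger (v : ℕ) : FOForm NC NR → SLForm NC NR
  | .conc A x   => .conc A x v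
  | .role r x y => .role r x y v
  | .eq x y     => .eqD x y
  | .neg φ      => .neg (dagger v φ)
  | .and φ ψ    => .and (dagger v φ) (dagger v ψ)
  | .ex x φ     => .exD x (dagger v φ)
  | .box φ      => .neg (.exW v (.neg (dagger v φ)))

/-- Satisfaction of the S5_ALC concept ∃◇r.A (existential restriction along
the modalized role ◇r). -/
def SatExDiaRole (NC NR : Type) (A : NC) (r : NR) (I : S5Interp NC NR)
    (w : I.W) (d : I.Δ) : Prop :=
  ∃ e, (∃ v, (d, e) ∈ I.role r v) ∧ e ∈ I.conc A w

/-! World moves fix the individual and role moves fix the world. Hence at an individual `d` without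
successors in the current world, a bisimulation sees nothing but the atoms at `d`: to reach a
successor of `d` it has to move to another world first, and so loses track of what holds of that
successor in the current one. The concept `∃◇r.A` keeps track of it. Thus one interpretation with
three worlds suffices: the edge `(a, b)` holds at one of them, `b ∈ A` at another, and the latter
is bisimilar at `a` to the third, where neither holds. -/

section Invariance

variable {I J : S5Interp NC NR} {w : I.W} {d : I.Δ} {v : J.W} {e : J.Δ}

theorem IsBisimulation.sat_iff {R : (I.W × I.Δ) → (J.W × J.Δ) → Prop} (hR : IsBisimulation I J R)
    (h : R (w, d) (v, e)) (C : DLConcept NC NR) : C.Sat I w d ↔ C.Sat J v e := by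
  induction C generalizing w d v e with
  | atom A => exact (hR w d v e h).1 A
  | neg C ih => exact not_congr (ih h)
  | and C D ihC ihD => exact and_congr (ihC h) (ihD h)
  | ex r C ih =>
    obtain ⟨-, -, -, forth, back⟩ := hR w d v e h
    constructor
    · rintro ⟨d', hdd', hC⟩
      obtain ⟨e', hee', h'⟩ := forth r d' hdd'
      exact ⟨e', hee', (ih h').1 hC⟩
    · rintro ⟨e', hee', hC⟩
      obtain ⟨d', hdd', h'⟩ := back r e' hee'
      exact ⟨d', hdd', (ih h').2 hC⟩
  | box C ih =>
    obtain ⟨-, forth, back, -, -⟩ := hR w d v e h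
    constructor
    · intro hC v'
      obtain ⟨w', h'⟩ := back v'
      exact (ih h').1 (hC w')
    · intro hC w'
      obtain ⟨v', h'⟩ := forth w'
      exact (ih h').2 (hC v')

theorem Bisimilar.sat_iff (h : Bisimilar I J w d v e) (C : DLConcept NC NR) :
    C.Sat I w d ↔ C.Sat J v e :=
  let ⟨_, hR, hwv⟩ := h
  hR.sat_iff hwv C

theorem Bisimilar.not_exists_concept (h : Bisimilar I J w d v e)
    {P : ∀ K : S5Interp NC NR, K.W → K.Δ → Prop} (hI : P I w d) (hJ : ¬ P J v e) :
    ¬ ∃ C : DLConcept NC NR, ∀ (K : S5Interp NC NR) (u : K.W) (x : K.Δ),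
      P K u x ↔ C.Sat K u x := by
  rintro ⟨C, hC⟩
  exact hJ ((hC J v e).2 ((h.sat_iff C).1 ((hC I w d).1 hI)))

end Invariance

theorem bisimilar_of_forall_notMem_role {I : S5Interp NC NR} {w v : I.W} {d : I.Δ}
    (hconc : ∀ A, d ∈ I.conc A w ↔ d ∈ I.conc A v)
    (hw : ∀ r e, (d, e) ∉ I.role r w) (hv : ∀ r e, (d, e) ∉ I.role r v) :
    Bisimilar I I w d v d := by
  refine ⟨fun p q => p = q ∨ p = (w, d) ∧ q = (v, d), ?_, .inr ⟨rfl, rfl⟩⟩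
  rintro _ _ _ _ (⟨⟨⟩⟩ | ⟨⟨⟩, ⟨⟩⟩)
  · exact ⟨fun _ => Iff.rfl, fun w' => ⟨w', .inl rfl⟩, fun v' => ⟨v', .inl rfl⟩,
      fun _ d' h => ⟨d', h, .inl rfl⟩, fun _ e' h => ⟨e', h, .inl rfl⟩⟩
  · exact ⟨hconc, fun w' => ⟨w', .inl rfl⟩, fun v' => ⟨v', .inl rfl⟩,
      fun r d' h => absurd h (hw r d'), fun r e' h => absurd h (hv r e')⟩

/-- The interpretation with worlds `w₁ = 0`, `w₂ = 1`, `w₃ = 2` and individuals `a = false`,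
`b = true` in which the edge `(a, b)` is present at `w₂` only and the label on `b` at `w₃` only.
It separates `∃◇r.A` from the bisimulation-invariant concepts. All role names share the edge and
all concept names the label, so that no case distinction on names arises. -/
def edgeLabelInterp (NC NR : Type) : S5Interp NC NR where
  W := Fin 3
  Δ := Bool
  W_nonempty := ⟨0⟩
  Δ_nonempty := ⟨false⟩
  conc _ w := {x | w = 2 ∧ x = true}
  role _ w := {p | w = 1 ∧ p = (false, true)}

theorem satExDiaRole_edgeLabelInterp_iff (A : NC) (r : NR) (w : Fin 3) :
    SatExDiaRole NC NR A r (edgeLabelInterp NC NR) w false ↔ w = 2 :=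
  ⟨fun ⟨_, _, hw, _⟩ => hw, fun hw => ⟨true, ⟨(1 : Fin 3), rfl, rfl⟩, hw, rfl⟩⟩

theorem bisimilar_edgeLabelInterp {w v : Fin 3} (hw : w ≠ 1) (hv : v ≠ 1) :
    Bisimilar (edgeLabelInterp NC NR) (edgeLabelInterp NC NR) w false v false :=
  bisimilar_of_forall_notMem_role
    (fun _ => iff_of_false (fun h => Bool.false_ne_true h.2) (fun h => Bool.false_ne_true h.2))
    (fun _ _ h => hw h.1) (fun _ _ h => hv h.1)

/-- the S5_ALC concept ∃◇r.A is not bisimulation invariant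
(witnessed by finite interpretations), and consequently is not expressible by
any S5^loc_ALC-concept. -/
theorem exDiaRole_not_expressible (NC NR : Type) (A : NC) (r : NR) :
    (∃ (I J : S5Interp NC NR) (w : I.W) (d : I.Δ) (v : J.W) (e : J.Δ),
      Finite I.W ∧ Finite I.Δ ∧ Finite J.W ∧ Finite J.Δ ∧
      Bisimilar I J w d v e ∧
      SatExDiaRole NC NR A r I w d ∧ ¬ SatExDiaRole NC NR A r J v e) ∧
    ¬ ∃ C : DLConcept NC NR,
      ∀ (I : S5Interp NC NR) (w : I.W) (d : I.Δ),
        SatExDiaRole NC NR A r I w d ↔ DLConcept.Sat I w d C := by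
  let I : S5Interp NC NR := edgeLabelInterp NC NR
  have hbisim : Bisimilar I I (2 : Fin 3) false (0 : Fin 3) false :=
    bisimilar_edgeLabelInterp (by decide) (by decide)
  have hsat : SatExDiaRole NC NR A r I (2 : Fin 3) false :=
    (satExDiaRole_edgeLabelInterp_iff A r 2).2 rfl
  have hnsat : ¬ SatExDiaRole NC NR A r I (0 : Fin 3) false :=
    (satExDiaRole_edgeLabelInterp_iff A r 0).not.2 (by decide)
  have hW : Finite I.W := inferInstanceAs (Finite (Fin 3))
  have hΔ : Finite I.Δ := inferInstanceAs (Finite Bool)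
  exact ⟨⟨I, I, _, _, _, _, hW, hΔ, hW, hΔ, hbisim, hsat, hnsat⟩,
    hbisim.not_exists_concept hsat hnsat⟩
end

section
/- Let I be an S5-interpretation, (w_0,d_0) ∈ W^I × Δ^I, ℓ ≥ 0, and let J be the partial unravelling of I at d_0 up to level ℓ, obtained by restricting the tree unravelling I*_{d_0} to the radius-(ℓ+1) Gaifman neighbourhood of the root d_0 and identifying each path d̄ at distance ℓ+1 from the root with the element π(d̄) in a fresh disjoint copy of I. Then J,w_0,d_0 ≈ I,w_0,d_0, where a bisimulation is given by the map ρ sending each surviving path to its last entry and each element of the copy of I to itself (with identity on worlds); moreover, J is finite whenever I is finite. -/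
variable {NC NR : Type}

/-! The projection `ρ` forgets how an element was reached, so it preserves concepts and maps edges
to edges. Conversely, an edge of `I` leaving `ρ x` lifts to an edge leaving `x`: a path of length
less than `ℓ` is prolonged by one entry, while from a path of length `ℓ`, or from an element of the
copy of `I`, the lifted edge leads into the copy. Worlds are untouched, so the graph of `ρ` is a
bisimulation. -/

/-- A pair of maps, on worlds and on individuals, whose joint graph is a bisimulation: the
counterpart for S5-interpretations of the bounded morphisms (p-morphisms) of modal logic. -/
structure IsBoundedMorphism (J I : S5Interp NC NR) (g : J.W → I.W) (f : J.Δ → I.Δ) : Prop where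
  surjective_world : Function.Surjective g
  mem_conc_iff : ∀ A w x, x ∈ J.conc A w ↔ f x ∈ I.conc A (g w)
  map_role : ∀ r w x y, (x, y) ∈ J.role r w → (f x, f y) ∈ I.role r (g w)
  exists_role_lift : ∀ r w x e, (f x, e) ∈ I.role r (g w) → ∃ y, (x, y) ∈ J.role r w ∧ f y = e

theorem IsBoundedMorphism.isBisimulation {J I : S5Interp NC NR} {g : J.W → I.W} {f : J.Δ → I.Δ}
    (h : IsBoundedMorphism J I g f) :
    IsBisimulation J I fun a b => g a.1 = b.1 ∧ f a.2 = b.2 := by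
  rintro w x _ _ ⟨rfl, rfl⟩
  refine ⟨fun A => h.mem_conc_iff A w x, fun w' => ⟨g w', rfl, rfl⟩, fun v' => ?_,
    fun r y hxy => ⟨f y, h.map_role r w x y hxy, rfl, rfl⟩, fun r e he => ?_⟩
  · obtain ⟨w', hw'⟩ := h.surjective_world v'
    exact ⟨w', hw', rfl⟩
  · obtain ⟨y, hxy, hy⟩ := h.exists_role_lift r w x e he
    exact ⟨y, hxy, rfl, hy⟩

section PartialUnravelling

variable {I : S5Interp NC NR} {d0 : I.Δ} {ℓ : ℕ}

theorem PPath.last_of_val_eq_append {p : PPath I d0 ℓ} {l : List I.Δ} {d : I.Δ}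
    (h : p.val = l ++ [d]) : p.last = d := by
  simp [PPath.last, h]

/-- The one-step prolongation of a path that has not yet reached length `ℓ`. -/
def PPath.snoc (p : PPath I d0 ℓ) (hp : p.val.length < ℓ) (d : I.Δ)
    (hd : roleStep I p.last d) : PPath I d0 ℓ :=
  ⟨p.val ++ [d],
    p.property.1.append (.singleton d)
      (by simpa [List.getLast?_eq_some_getLast, PPath.last] using hd),
    by simpa using hp⟩

theorem PPath.last_snoc (p : PPath I d0 ℓ) (hp : p.val.length < ℓ) (d : I.Δ)
    (hd : roleStep I p.last d) : (p.snoc hp d hd).last = d :=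
  last_of_val_eq_append rfl

instance PPath.finite [Finite I.Δ] : Finite (PPath I d0 ℓ) :=
  ((List.finite_length_le I.Δ ℓ).subset fun _ hl => hl.2).to_subtype

instance S5Interp.finite_partialUnravel [Finite I.Δ] : Finite (I.partialUnravel d0 ℓ).Δ :=
  inferInstanceAs (Finite (PPath I d0 ℓ ⊕ I.Δ))

theorem punravelProj_mem_role {r : NR} {w : I.W} {x y : PPath I d0 ℓ ⊕ I.Δ}
    (h : (x, y) ∈ (I.partialUnravel d0 ℓ).role r w) :
    (punravelProj I d0 ℓ x, punravelProj I d0 ℓ y) ∈ I.role r w := by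
  match x, y, h with
  | .inl p, .inl q, ⟨d, hd, hq⟩ =>
    obtain rfl : q.last = d := PPath.last_of_val_eq_append hq
    exact hd
  | .inl _, .inr _, h => exact h.2
  | .inr _, .inr _, h => exact h

theorem exists_partialUnravel_role_lift {r : NR} {w : I.W} (x : PPath I d0 ℓ ⊕ I.Δ) {e : I.Δ}
    (he : (punravelProj I d0 ℓ x, e) ∈ I.role r w) :
    ∃ y, (x, y) ∈ (I.partialUnravel d0 ℓ).role r w ∧ punravelProj I d0 ℓ y = e := by
  rcases x with p | d
  · rcases p.property.2.eq_or_lt with hp | hp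
    · exact ⟨.inr e, ⟨hp, he⟩, rfl⟩
    · exact ⟨.inl (p.snoc hp e ⟨r, w, he⟩), ⟨e, he, rfl⟩, p.last_snoc hp e ⟨r, w, he⟩⟩
  · exact ⟨.inr e, he, rfl⟩

variable (I d0 ℓ) in
theorem isBoundedMorphism_punravelProj :
    IsBoundedMorphism (I.partialUnravel d0 ℓ) I id (punravelProj I d0 ℓ) where
  surjective_world := Function.surjective_id
  mem_conc_iff _ _ _ := Iff.rfl
  map_role _ _ _ _ := punravelProj_mem_role
  exists_role_lift _ _ x _ := exists_partialUnravel_role_lift x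

end PartialUnravelling

/-- the partial unravelling of I at d₀ up to level ℓ is
bisimilar to I via the map ρ sending each surviving path to its last entry and
each element of the fresh copy of I to itself (identity on worlds); moreover it
is finite whenever I is finite. -/
theorem partialUnravel_bisim (NC NR : Type) (I : S5Interp NC NR)
    (d0 : I.Δ) (ℓ : ℕ) (w0 : I.W) :
    IsBisimulation (I.partialUnravel d0 ℓ) I
      (fun a b => a.1 = b.1 ∧ punravelProj I d0 ℓ a.2 = b.2) ∧
    Bisimilar (I.partialUnravel d0 ℓ) I w0
      (Sum.inl (⟨[], List.Chain.nil, Nat.zero_le ℓ⟩ : PPath I d0 ℓ)) w0 d0 ∧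
    (Finite I.W → Finite I.Δ →
      Finite (I.partialUnravel d0 ℓ).W ∧ Finite (I.partialUnravel d0 ℓ).Δ) := by
  have bisim := (isBoundedMorphism_punravelProj I d0 ℓ).isBisimulation
  exact ⟨bisim, ⟨_, bisim, rfl, rfl⟩, fun hW _ => ⟨hW, inferInstance⟩⟩
end
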